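/- If finite simple graphs G and H satisfy G ≅_{S+} H, then G is walk-regular if and only if H is walk-regular, and G is 1-walk-regular if and only if H is 1-walk-regular. -/

import Mathlib

/-!
A matrix `M` indexed by pairs is the Choi matrix of the linear map
`Φ X = (∑ M_{(g,h),(g',h')} X_{g,g'})_{h,h'}`. The constraints on an isomorphism matrix make `Φ`
unital, make it carry `A_G` to `A_H`, and make it commute with Schur multiplication by `I` and
by the adjacency matrices, while `M ∈ S+` makes it completely positive: `Φ X = ∑ Kᵢ X Kᵢᴴ`.
For unital `Φ` one has the identity
`∑ (Kᵢ A - Φ(A) Kᵢ)(Kᵢ A - Φ(A) Kᵢ)ᴴ = Φ(A Aᴴ) - Φ(A) Φ(A)ᴴ`.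
For `A = A_G` the right-hand side has trace zero: `tr (A Aᵀ)` is the sum of the entries of `A ∘ A`,
and `Φ` preserves both traces and sums of entries. So `Kᵢ A_G = A_H Kᵢ` for all `i`; hence
`Φ(A_G ^ ℓ) = A_H ^ ℓ`, and `Φ` transports the walk-regularity equations from `G` to `H`.
-/

open Matrix BigOperators

/-- `rel(g,g') = rel(h,h')`. -/
def relEq {α β : Type*} (G : SimpleGraph α) (H : SimpleGraph β)
    (g g' : α) (h h' : β) : Prop :=
  (g = g' ↔ h = h') ∧ (G.Adj g g' ↔ H.Adj h h')

/-- `M` satisfies the linear constraints of an isomorphism matrix for `G` to `H`. -/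
def IsIsoMatrix {α β : Type*} [Fintype α] [Fintype β]
    (G : SimpleGraph α) (H : SimpleGraph β)
    (M : Matrix (α × β) (α × β) ℝ) : Prop :=
  (∀ g g' : α, ∑ h : β, ∑ h' : β, M (g, h) (g', h') = 1) ∧
  (∀ h h' : β, ∑ g : α, ∑ g' : α, M (g, h) (g', h') = 1) ∧
  (∀ g g' h h', ¬ relEq G H g g' h h' → M (g, h) (g', h') = 0)

/-- `G` is walk-regular: `I ∘ A^ℓ = a_ℓ I` for some number `a_ℓ`, for every `ℓ`. -/
def WalkRegular {V : Type*} [Fintype V] [DecidableEq V]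
    (G : SimpleGraph V) [DecidableRel G.Adj] : Prop :=
  ∀ ℓ : ℕ, ∃ a : ℝ,
    Matrix.hadamard (1 : Matrix V V ℝ) ((G.adjMatrix ℝ) ^ ℓ) = a • (1 : Matrix V V ℝ)

/-- `G` is 1-walk-regular: it is walk-regular and `A ∘ A^ℓ = b_ℓ A` for some `b_ℓ`. -/
def OneWalkRegular {V : Type*} [Fintype V] [DecidableEq V]
    (G : SimpleGraph V) [DecidableRel G.Adj] : Prop :=
  WalkRegular G ∧
  ∀ ℓ : ℕ, ∃ b : ℝ,
    Matrix.hadamard (G.adjMatrix ℝ) ((G.adjMatrix ℝ) ^ ℓ) = b • G.adjMatrix ℝ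

section ChoiMap

variable {R m n : Type*} [CommSemiring R] [Fintype m]

/-- The linear map on matrices whose Choi matrix is `M`, with the index of the source matrix in
the first coordinate of a pair. -/
def choiMap (M : Matrix (m × n) (m × n) R) : Matrix m m R →ₗ[R] Matrix n n R where
  toFun X := of fun h h' => ∑ g, ∑ g', M (g, h) (g', h') * X g g'
  map_add' X Y := by
    ext h h'
    simp [mul_add, Finset.sum_add_distrib]
  map_smul' c X := by
    ext h h'
    simp [Finset.mul_sum, mul_left_comm]

lemma choiMap_apply (M : Matrix (m × n) (m × n) R) (X : Matrix m m R) (h h' : n) :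
    choiMap M X h h' = ∑ g, ∑ g', M (g, h) (g', h') * X g g' :=
  rfl

/-- The matrices `S` and `T` agree along the support of `M`. For `M` an isomorphism matrix, `S` and
`T` are the matrices of corresponding relations on the vertices of two graphs. -/
def AgreeOnSupport (M : Matrix (m × n) (m × n) R) (S : Matrix m m R) (T : Matrix n n R) : Prop :=
  ∀ ⦃g g' h h'⦄, M (g, h) (g', h') ≠ 0 → S g g' = T h h'

lemma AgreeOnSupport.choiMap_hadamard {M : Matrix (m × n) (m × n) R} {S : Matrix m m R}
    {T : Matrix n n R} (hST : AgreeOnSupport M S T) (X : Matrix m m R) :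
    choiMap M (S ⊙ X) = T ⊙ choiMap M X := by
  ext h h'
  simp only [choiMap_apply, hadamard_apply, Finset.mul_sum]
  refine Finset.sum_congr rfl fun g _ => Finset.sum_congr rfl fun g' _ => ?_
  by_cases hM : M (g, h) (g', h') = 0
  · simp [hM]
  · rw [hST hM, mul_left_comm]

end ChoiMap

section KrausMap

section CommSemiring

variable {R ι m n : Type*} [CommSemiring R] [StarRing R] [Fintype ι] [Fintype m]

/-- The map `X ↦ ∑ i, K i * X * (K i)ᴴ` with Kraus operators `K`: the general form of a completely
positive map between matrix algebras. -/
def krausMap (K : ι → Matrix n m R) : Matrix m m R →ₗ[R] Matrix n n R where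
  toFun X := ∑ i, K i * X * (K i)ᴴ
  map_add' X Y := by simp only [Matrix.mul_add, Matrix.add_mul, Finset.sum_add_distrib]
  map_smul' c X := by
    simp only [Matrix.mul_smul, Matrix.smul_mul, Finset.smul_sum, RingHom.id_apply]

lemma krausMap_apply (K : ι → Matrix n m R) (X : Matrix m m R) :
    krausMap K X = ∑ i, K i * X * (K i)ᴴ :=
  rfl

lemma krausMap_conjTranspose (K : ι → Matrix n m R) (X : Matrix m m R) :
    krausMap K Xᴴ = (krausMap K X)ᴴ := by
  simp only [krausMap_apply, conjTranspose_sum, conjTranspose_mul, conjTranspose_conjTranspose,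
    Matrix.mul_assoc]

lemma krausMap_mul_of_intertwines [Fintype n] {K : ι → Matrix n m R} {A : Matrix m m R}
    {B : Matrix n n R} (hK : ∀ i, K i * A = B * K i) (X : Matrix m m R) :
    krausMap K (A * X) = B * krausMap K X := by
  simp only [krausMap_apply, Matrix.mul_sum, ← Matrix.mul_assoc, hK]

end CommSemiring

variable {R ι m n : Type*} [CommRing R] [StarRing R] [Fintype ι] [Fintype m] [Fintype n]
  [DecidableEq m] [DecidableEq n] {K : ι → Matrix n m R}

lemma sum_intertwiningDefect_mul_conjTranspose (hK : krausMap K 1 = 1) (A : Matrix m m R) :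
    ∑ i, (K i * A - krausMap K A * K i) * (K i * A - krausMap K A * K i)ᴴ =
      krausMap K (A * Aᴴ) - krausMap K A * (krausMap K A)ᴴ := by
  set B := krausMap K A with hB
  have expand : ∀ i, (K i * A - B * K i) * (K i * A - B * K i)ᴴ =
      K i * (A * Aᴴ) * (K i)ᴴ - B * (K i * Aᴴ * (K i)ᴴ)
        - (K i * A * (K i)ᴴ * Bᴴ - B * (K i * (1 : Matrix m m R) * (K i)ᴴ) * Bᴴ) := fun i => by
    simp only [conjTranspose_sub, conjTranspose_mul, Matrix.sub_mul, Matrix.mul_sub,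
      Matrix.mul_assoc, Matrix.one_mul]
  simp only [expand, Finset.sum_sub_distrib, ← Matrix.sum_mul, ← Matrix.mul_sum, ← krausMap_apply]
  rw [krausMap_conjTranspose, hK, ← hB, Matrix.mul_one, sub_self, sub_zero]

lemma kraus_intertwines_of_trace_eq [PartialOrder R] [StarOrderedRing R] [NoZeroDivisors R]
    (hK : krausMap K 1 = 1) {A : Matrix m m R}
    (hA : (krausMap K (A * Aᴴ)).trace = (krausMap K A * (krausMap K A)ᴴ).trace) (i : ι) :
    K i * A = krausMap K A * K i := by
  let E : ι → Matrix n m R := fun j => K j * A - krausMap K A * K j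
  have sum_trace : ∑ j, (E j * (E j)ᴴ).trace = 0 := by
    rw [← trace_sum, sum_intertwiningDefect_mul_conjTranspose hK, trace_sub, hA, sub_self]
  have trace_nonneg : ∀ j ∈ Finset.univ, 0 ≤ (E j * (E j)ᴴ).trace := fun j _ =>
    (posSemidef_self_mul_conjTranspose (E j)).trace_nonneg
  have trace_eq_zero := (Finset.sum_eq_zero_iff_of_nonneg trace_nonneg).1 sum_trace i
    (Finset.mem_univ i)
  exact sub_eq_zero.1 (trace_mul_conjTranspose_self_eq_zero_iff.1 trace_eq_zero)

end KrausMap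

section PosSemidef

open scoped ComplexOrder MatrixOrder Matrix.Norms.L2Operator

variable {𝕜 m n : Type*} [RCLike 𝕜] [Fintype m] [Fintype n] {M : Matrix (m × n) (m × n) 𝕜}

lemma exists_choiMap_eq_krausMap (hM : M.PosSemidef) :
    ∃ K : m × n → Matrix n m 𝕜, choiMap M = krausMap K := by
  classical
  obtain ⟨C, rfl⟩ := CStarAlgebra.nonneg_iff_eq_star_mul_self.1 hM.nonneg
  refine ⟨fun p => of fun h g => star (C p (g, h)), LinearMap.ext fun X => ?_⟩
  ext h h'
  simp only [choiMap_apply, krausMap_apply, star_eq_conjTranspose, Matrix.mul_apply,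
    conjTranspose_apply, Matrix.sum_apply, of_apply, star_star, Finset.sum_mul]
  calc ∑ g, ∑ g', ∑ p, star (C p (g, h)) * C p (g', h') * X g g'
      = ∑ p, ∑ g, ∑ g', star (C p (g, h)) * C p (g', h') * X g g' :=
        (Finset.sum_congr rfl fun _ _ => Finset.sum_comm).trans Finset.sum_comm
    _ = ∑ p, ∑ g', ∑ g, star (C p (g, h)) * X g g' * C p (g', h') := by
        simp only [mul_right_comm]
        exact Finset.sum_congr rfl fun _ _ => Finset.sum_comm

lemma choiMap_mul_of_trace_eq [DecidableEq m] [DecidableEq n] (hM : M.PosSemidef)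
    (h_one : choiMap M 1 = 1) {A : Matrix m m 𝕜}
    (hA : (choiMap M (A * Aᴴ)).trace = (choiMap M A * (choiMap M A)ᴴ).trace)
    (X : Matrix m m 𝕜) : choiMap M (A * X) = choiMap M A * choiMap M X := by
  obtain ⟨K, hK⟩ := exists_choiMap_eq_krausMap hM
  rw [hK] at h_one hA ⊢
  exact krausMap_mul_of_intertwines (kraus_intertwines_of_trace_eq h_one hA) X

end PosSemidef

lemma sum_one_hadamard {R n : Type*} [NonAssocSemiring R] [Fintype n] [DecidableEq n]
    (X : Matrix n n R) : ∑ i, ∑ j, (1 ⊙ X) i j = X.trace := by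
  simp only [one_hadamard, diagonal_apply, Fintype.sum_ite_eq, trace]

namespace IsIsoMatrix

variable {α β : Type*} [Fintype α] [Fintype β] {G : SimpleGraph α} {H : SimpleGraph β}
  {M : Matrix (α × β) (α × β) ℝ}

lemma swap (hM : IsIsoMatrix G H M) : IsIsoMatrix H G (M.submatrix Prod.swap Prod.swap) := by
  obtain ⟨sum_right, sum_left, support⟩ := hM
  exact ⟨sum_left, sum_right, fun h h' g g' hrel =>
    support g g' h h' fun hrel' => hrel ⟨hrel'.1.symm, hrel'.2.symm⟩⟩

lemma relEq_of_ne_zero (hM : IsIsoMatrix G H M) {g g' : α} {h h' : β}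
    (hne : M (g, h) (g', h') ≠ 0) : relEq G H g g' h h' :=
  not_not.1 (mt (hM.2.2 g g' h h') hne)

lemma agreeOnSupport_one [DecidableEq α] [DecidableEq β] (hM : IsIsoMatrix G H M) :
    AgreeOnSupport M 1 1 := fun _ _ _ _ hne => by
  simp only [Matrix.one_apply, (hM.relEq_of_ne_zero hne).1]

lemma agreeOnSupport_adjMatrix [DecidableRel G.Adj] [DecidableRel H.Adj]
    (hM : IsIsoMatrix G H M) : AgreeOnSupport M (G.adjMatrix ℝ) (H.adjMatrix ℝ) :=
  fun _ _ _ _ hne => by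
    simp only [SimpleGraph.adjMatrix_apply, (hM.relEq_of_ne_zero hne).2]

lemma choiMap_of_one (hM : IsIsoMatrix G H M) : choiMap M (of 1) = of 1 := by
  ext h h'
  simpa [choiMap_apply] using hM.2.1 h h'

lemma choiMap_eq (hM : IsIsoMatrix G H M) {S : Matrix α α ℝ} {T : Matrix β β ℝ}
    (hST : AgreeOnSupport M S T) : choiMap M S = T := by
  simpa [hM.choiMap_of_one] using hST.choiMap_hadamard (of 1)

lemma sum_choiMap (hM : IsIsoMatrix G H M) (X : Matrix α α ℝ) :
    ∑ h, ∑ h', choiMap M X h h' = ∑ g, ∑ g', X g g' := by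
  calc ∑ h, ∑ h', choiMap M X h h'
      = ∑ g, ∑ g', (∑ h, ∑ h', M (g, h) (g', h')) * X g g' := by
        simp only [choiMap_apply, Finset.sum_mul,
          Finset.sum_comm (s := (Finset.univ : Finset β)) (t := (Finset.univ : Finset α))]
    _ = ∑ g, ∑ g', X g g' := by simp only [hM.1, one_mul]

lemma trace_choiMap (hM : IsIsoMatrix G H M) (X : Matrix α α ℝ) :
    (choiMap M X).trace = X.trace := by
  classical
  rw [← sum_one_hadamard, ← sum_one_hadamard, ← hM.agreeOnSupport_one.choiMap_hadamard,
    hM.sum_choiMap]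

lemma trace_choiMap_mul_conjTranspose (hM : IsIsoMatrix G H M) {S : Matrix α α ℝ}
    {T : Matrix β β ℝ} (hST : AgreeOnSupport M S T) :
    (choiMap M (S * Sᴴ)).trace = (T * Tᴴ).trace := by
  calc (choiMap M (S * Sᴴ)).trace
      = ∑ g, ∑ g', (S ⊙ S) g g' := by
        rw [hM.trace_choiMap, conjTranspose_eq_transpose_of_trivial, sum_hadamard_eq]
    _ = ∑ h, ∑ h', (T ⊙ T) h h' := by
        rw [← hM.sum_choiMap, hST.choiMap_hadamard, hM.choiMap_eq hST]
    _ = (T * Tᴴ).trace := by rw [sum_hadamard_eq, conjTranspose_eq_transpose_of_trivial]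

variable [DecidableEq α] [DecidableEq β]

lemma choiMap_pow (hM : IsIsoMatrix G H M) (hpos : M.PosSemidef) {S : Matrix α α ℝ}
    {T : Matrix β β ℝ} (hST : AgreeOnSupport M S T) (ℓ : ℕ) : choiMap M (S ^ ℓ) = T ^ ℓ := by
  have map_one : choiMap M 1 = 1 := hM.choiMap_eq hM.agreeOnSupport_one
  have map_mul (X : Matrix α α ℝ) : choiMap M (S * X) = T * choiMap M X := by
    have trace_eq := hM.trace_choiMap_mul_conjTranspose hST
    rw [← hM.choiMap_eq hST] at trace_eq ⊢
    exact choiMap_mul_of_trace_eq hpos map_one trace_eq X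
  induction ℓ with
  | zero => simpa only [pow_zero] using map_one
  | succ ℓ ih => rw [pow_succ', pow_succ', map_mul, ih]

lemma hadamard_adjMatrix_pow_eq_smul [DecidableRel G.Adj] [DecidableRel H.Adj]
    (hM : IsIsoMatrix G H M) (hpos : M.PosSemidef) {S : Matrix α α ℝ} {T : Matrix β β ℝ}
    (hST : AgreeOnSupport M S T) {ℓ : ℕ} {c : ℝ} (hS : S ⊙ (G.adjMatrix ℝ ^ ℓ) = c • S) :
    T ⊙ (H.adjMatrix ℝ ^ ℓ) = c • T := by
  calc T ⊙ (H.adjMatrix ℝ ^ ℓ)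
      = choiMap M (S ⊙ (G.adjMatrix ℝ ^ ℓ)) := by
        rw [hST.choiMap_hadamard, hM.choiMap_pow hpos hM.agreeOnSupport_adjMatrix]
    _ = c • T := by rw [hS, map_smul, hM.choiMap_eq hST]

variable [DecidableRel G.Adj] [DecidableRel H.Adj]

lemma walkRegular (hM : IsIsoMatrix G H M) (hpos : M.PosSemidef) (hG : WalkRegular G) :
    WalkRegular H := fun ℓ =>
  (hG ℓ).imp fun _ => hM.hadamard_adjMatrix_pow_eq_smul hpos hM.agreeOnSupport_one

lemma oneWalkRegular (hM : IsIsoMatrix G H M) (hpos : M.PosSemidef) (hG : OneWalkRegular G) :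
    OneWalkRegular H :=
  ⟨hM.walkRegular hpos hG.1, fun ℓ =>
    (hG.2 ℓ).imp fun _ => hM.hadamard_adjMatrix_pow_eq_smul hpos hM.agreeOnSupport_adjMatrix⟩

end IsIsoMatrix

/-- If `G ≅_{S+} H` then `G` is (1-)walk-regular iff `H` is (1-)walk-regular. -/
theorem walkRegular_iff_of_sPlus_iso {α β : Type*}
    [Fintype α] [Fintype β] [DecidableEq α] [DecidableEq β]
    (G : SimpleGraph α) (H : SimpleGraph β)
    [DecidableRel G.Adj] [DecidableRel H.Adj]
    (h : ∃ M, IsIsoMatrix G H M ∧ M.PosSemidef) :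
    (WalkRegular G ↔ WalkRegular H) ∧ (OneWalkRegular G ↔ OneWalkRegular H) := by
  obtain ⟨M, hM, hpos⟩ := h
  have hpos' : (M.submatrix Prod.swap Prod.swap).PosSemidef := hpos.submatrix Prod.swap
  exact ⟨⟨hM.walkRegular hpos, hM.swap.walkRegular hpos'⟩,
    ⟨hM.oneWalkRegular hpos, hM.swap.oneWalkRegular hpos'⟩⟩
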